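/- Landen's trilogarithm identity: for all real z with 0 < z < 1, Li₃(z) + Li₃(1−z) + Li₃(1 − 1/z) = ζ(3) + (1/6)·(log z)³ + (π²/6)·log z − (1/2)·(log z)²·log(1−z). -/

import Mathlib

noncomputable def Li2 (z : ℝ) : ℝ := -∫ t in (0:ℝ)..z, Real.log (1 - t) / t

noncomputable def Li3 (z : ℝ) : ℝ := ∫ t in (0:ℝ)..z, Li2 t / t

open Filter Topology Set

lemma HasSum.congr_fun' {f g : ℕ → ℝ} {a : ℝ} (h : HasSum f a) (e : ∀ n, g n = f n) :
    HasSum g a := by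
  rwa [funext e]

lemma aux_deriv (f : ℝ → ℝ) (hf : ContinuousOn f (Iio 1)) (hd : DifferentiableAt ℝ f 0)
    (h0 : f 0 = 0) (x : ℝ) (hx : x < 1) :
    HasDerivAt (fun x => ∫ t in (0:ℝ)..x, f t / t) (dslope f 0 x) x := by
  have hc : ContinuousOn (dslope f 0) (Iio 1) := by
    rw [continuousOn_dslope (Iio_mem_nhds (by norm_num))]
    exact ⟨hf, hd⟩
  have heq : (fun x => ∫ t in (0:ℝ)..x, f t / t) = fun x => ∫ t in (0:ℝ)..x, dslope f 0 t := by
    funext y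
    apply intervalIntegral.integral_congr_ae
    have : ∀ᵐ t : ℝ, t ≠ 0 := by
      simp [MeasureTheory.ae_iff]
    filter_upwards [this] with t ht _
    rw [dslope_of_ne _ ht, slope_def_field, h0]
    simp
  rw [heq]
  apply intervalIntegral.integral_hasDerivAt_right
  · apply ContinuousOn.intervalIntegrable
    apply hc.mono
    intro t ht
    exact lt_of_le_of_lt ht.2 (by simp [hx])
  · exact hc.stronglyMeasurableAtFilter isOpen_Iio x hx
  · exact hc.continuousAt (Iio_mem_nhds hx)

lemma Li2_eq : Li2 = fun x => ∫ t in (0:ℝ)..x, (-Real.log (1 - t)) / t := by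
  funext x
  simp [Li2, neg_div]

lemma log_der (x : ℝ) (hx : x < 1) : HasDerivAt (fun t => -Real.log (1 - t)) (1 / (1 - x)) x := by
  have := (((hasDerivAt_id x).const_sub 1).log (by simp only [id]; linarith)).neg
  refine this.congr_deriv ?_
  simp only [id]
  ring

lemma Li2_der' (x : ℝ) (hx : x < 1) :
    HasDerivAt Li2 (dslope (fun t => -Real.log (1 - t)) 0 x) x := by
  rw [Li2_eq]
  apply aux_deriv (fun t => -Real.log (1 - t))
  · intro y hy
    exact (log_der y hy).continuousAt.continuousWithinAt
  · exact (log_der 0 (by norm_num)).differentiableAt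
  · simp
  · exact hx

lemma Li2_zero : Li2 0 = 0 := by simp [Li2]
lemma Li3_zero : Li3 0 = 0 := by simp [Li3]

lemma Li3_der' (x : ℝ) (hx : x < 1) : HasDerivAt Li3 (dslope Li2 0 x) x := by
  apply aux_deriv Li2
  · intro y hy
    exact (Li2_der' y hy).continuousAt.continuousWithinAt
  · exact (Li2_der' 0 (by norm_num)).differentiableAt
  · exact Li2_zero
  · exact hx

lemma Li2_der (x : ℝ) (hx : x < 1) (h : x ≠ 0) : HasDerivAt Li2 (-Real.log (1 - x) / x) x := by
  have := Li2_der' x hx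
  rw [dslope_of_ne _ h, slope_def_field] at this
  simpa using this

lemma Li3_der (x : ℝ) (hx : x < 1) (h : x ≠ 0) : HasDerivAt Li3 (Li2 x / x) x := by
  have := Li3_der' x hx
  rw [dslope_of_ne _ h, slope_def_field, Li2_zero] at this
  simpa using this

lemma aux_series (k : ℕ) (f : ℝ → ℝ)
    (hf : ∀ t, 0 < t → t < 1 → HasSum (fun n : ℕ => t ^ (n + 1) / ((n:ℝ) + 1) ^ k) (f t))
    (x : ℝ) (h0 : 0 < x) (h1 : x < 1) :
    HasSum (fun n : ℕ => x ^ (n + 1) / ((n:ℝ) + 1) ^ (k + 1)) (∫ t in (0:ℝ)..x, f t / t) := by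
  have key := intervalIntegral.hasSum_integral_of_dominated_convergence
    (μ := MeasureTheory.volume) (a := 0) (b := x)
    (F := fun (n : ℕ) (t : ℝ) => t ^ n / ((n:ℝ) + 1) ^ k) (f := fun t => f t / t)
    (fun n _ => x ^ n)
    (fun n => (by fun_prop : Continuous fun t : ℝ => t ^ n / ((n:ℝ) + 1) ^ k).aestronglyMeasurable)
    (by
      intro n
      refine Eventually.of_forall fun t ht => ?_
      rw [uIoc_of_le h0.le] at ht
      have ht0 := ht.1
      have h2 : (1:ℝ) ≤ ((n:ℝ) + 1) ^ k := one_le_pow₀ (by simp)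
      rw [Real.norm_of_nonneg (by positivity)]
      calc t ^ n / ((n:ℝ) + 1) ^ k ≤ t ^ n := div_le_self (by positivity) h2
        _ ≤ x ^ n := pow_le_pow_left₀ ht0.le ht.2 n)
    (Eventually.of_forall fun t _ => summable_geometric_of_lt_one h0.le h1)
    (by simp)
    (by
      refine Eventually.of_forall fun t ht => ?_
      rw [uIoc_of_le h0.le] at ht
      have ht0 := ht.1
      have := (hf t ht0 (ht.2.trans_lt h1)).div_const t
      refine this.congr_fun' fun n => ?_
      field_simp
      ring)
  refine key.congr_fun' fun n => ?_
  rw [intervalIntegral.integral_div, integral_pow]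
  field_simp
  simp
  ring

lemma Li2_series (x : ℝ) (h0 : 0 < x) (h1 : x < 1) :
    HasSum (fun n : ℕ => x ^ (n + 1) / ((n:ℝ) + 1) ^ 2) (Li2 x) := by
  rw [Li2_eq]
  apply aux_series 1 _ _ x h0 h1
  intro t ht0 ht1
  simpa using Real.hasSum_pow_div_log_of_abs_lt_one (abs_lt.2 ⟨by linarith, ht1⟩)

lemma Li3_series (x : ℝ) (h0 : 0 < x) (h1 : x < 1) :
    HasSum (fun n : ℕ => x ^ (n + 1) / ((n:ℝ) + 1) ^ 3) (Li3 x) :=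
  aux_series 2 _ Li2_series x h0 h1

lemma aux_lim (k : ℕ) (hk : 1 < k) (f : ℝ → ℝ)
    (hf : ∀ t, 0 < t → t < 1 → HasSum (fun n : ℕ => t ^ (n + 1) / ((n:ℝ) + 1) ^ k) (f t)) :
    Tendsto f (𝓝[<] 1) (𝓝 (∑' n : ℕ, 1 / ((n : ℝ) + 1) ^ k)) := by
  have hs : Summable (fun n : ℕ => 1 / ((n : ℝ) + 1) ^ k) := by
    have := (summable_nat_add_iff 1).2 (Real.summable_one_div_nat_pow.2 hk)
    simpa using this
  have hc : ContinuousOn (fun t : ℝ => ∑' n : ℕ, t ^ (n + 1) / ((n:ℝ) + 1) ^ k) (Icc 0 1) := by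
    refine continuousOn_tsum (fun n => by fun_prop) hs ?_
    intro n t ht
    have := ht.1
    rw [Real.norm_of_nonneg (by positivity)]
    gcongr
    exact pow_le_one₀ ht.1 ht.2
  have h := (hc 1 (by simp)).mono (Ioo_subset_Icc_self)
  unfold ContinuousWithinAt at h
  rw [nhdsWithin_Ioo_eq_nhdsLT (by norm_num)] at h
  simp only [one_pow] at h
  refine h.congr' ?_
  filter_upwards [Ioo_mem_nhdsLT (show (0:ℝ) < 1 by norm_num)] with t ht
  exact (hf t ht.1 ht.2).tsum_eq

lemma aux_const (G : ℝ → ℝ) (c : ℝ) (hG : ∀ x, 0 < x → x < 1 → HasDerivAt G 0 x)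
    (hl : Tendsto G (𝓝[<] 1) (𝓝 c)) (x : ℝ) (h0 : 0 < x) (h1 : x < 1) : G x = c := by
  have hcon : ∀ y ∈ Ioo (0:ℝ) 1, G y = G x := fun y hy =>
    isOpen_Ioo.is_const_of_deriv_eq_zero isPreconnected_Ioo
      (fun w hw => (hG w hw.1 hw.2).differentiableAt.differentiableWithinAt)
      (fun w hw => (hG w hw.1 hw.2).deriv) hy ⟨h0, h1⟩
  refine tendsto_nhds_unique (tendsto_const_nhds.congr' ?_) hl
  filter_upwards [Ioo_mem_nhdsLT (show (0:ℝ) < 1 by norm_num)] with t ht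
  exact (hcon t ht).symm

lemma loglog : Tendsto (fun z : ℝ => Real.log z * Real.log (1 - z)) (𝓝[<] 1) (𝓝 0) := by
  have hm : Tendsto (fun z : ℝ => 1 - z) (𝓝[<] 1) (𝓝[>] 0) := by
    refine tendsto_nhdsWithin_iff.2 ⟨?_, ?_⟩
    · have : ContinuousAt (fun z : ℝ => 1 - z) 1 := by fun_prop
      simpa [ContinuousAt] using this.tendsto.mono_left (nhdsWithin_le_nhds (s := Iio 1))
    · filter_upwards [self_mem_nhdsWithin] with z hz
      simpa using hz
  have hA := ((Real.continuous_mul_log.tendsto 0).mono_left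
    (nhdsWithin_le_nhds (s := Ioi 0))).comp hm
  have hB : Tendsto (dslope Real.log 1) (𝓝[<] 1) (𝓝 (dslope Real.log 1 1)) :=
    ((continuousAt_dslope_same.2
      (Real.differentiableAt_log one_ne_zero)).tendsto).mono_left nhdsWithin_le_nhds
  have := (hA.mul hB).neg
  simp only [zero_mul, neg_zero] at this
  refine this.congr' ?_
  filter_upwards [self_mem_nhdsWithin] with z hz
  have hz : z < 1 := hz
  have h1 : z - 1 ≠ 0 := by linarith
  rw [dslope_of_ne _ hz.ne, slope_def_field]
  simp only [Function.comp, Real.log_one, sub_zero]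
  field_simp
  ring

lemma lim_left {f : ℝ → ℝ} {c : ℝ} (hf : ContinuousAt f 1) (h : f 1 = c) :
    Tendsto f (𝓝[<] 1) (𝓝 c) := h ▸ hf.tendsto.mono_left nhdsWithin_le_nhds

lemma lim_Li2' : ContinuousAt (fun z => Li2 (1 - z)) 1 := by
  apply ContinuousAt.comp (g := Li2)
  · exact (Li2_der' _ (by norm_num)).continuousAt
  · fun_prop
lemma lim_Li3' : ContinuousAt (fun z => Li3 (1 - z)) 1 := by
  apply ContinuousAt.comp (g := Li3)
  · exact (Li3_der' _ (by norm_num)).continuousAt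
  · fun_prop
lemma lim_Li2'' : ContinuousAt (fun z => Li2 (1 - 1 / z)) 1 := by
  apply ContinuousAt.comp (g := Li2)
  · exact (Li2_der' _ (by norm_num)).continuousAt
  · fun_prop (disch := norm_num)
lemma lim_Li3'' : ContinuousAt (fun z => Li3 (1 - 1 / z)) 1 := by
  apply ContinuousAt.comp (g := Li3)
  · exact (Li3_der' _ (by norm_num)).continuousAt
  · fun_prop (disch := norm_num)

lemma der_sub (z : ℝ) : HasDerivAt (fun z : ℝ => 1 - z) (-1) z := by
  simpa using (hasDerivAt_id z).const_sub 1

lemma der_inv (z : ℝ) (h : z ≠ 0) : HasDerivAt (fun z : ℝ => 1 - 1 / z) (1 / z ^ 2) z := by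
  simpa using (hasDerivAt_inv h).const_sub 1

lemma der_log1 (z : ℝ) (h : z < 1) : HasDerivAt (fun z : ℝ => Real.log (1 - z)) (-1 / (1 - z)) z :=
  (der_sub z).log (by linarith)

lemma inv_lt {z : ℝ} (h0 : 0 < z) (h1 : z < 1) : 1 - 1 / z < 0 := by
  have := one_lt_one_div h0 h1
  linarith

lemma reflection (z : ℝ) (h0 : 0 < z) (h1 : z < 1) :
    Li2 z + Li2 (1 - z) + Real.log z * Real.log (1 - z) = Real.pi ^ 2 / 6 := by
  apply aux_const (fun z => Li2 z + Li2 (1 - z) + Real.log z * Real.log (1 - z)) _ _ _ z h0 h1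
  · intro x h0 h1
    have hx : 1 - x ≠ 0 := by linarith
    have A := ((Li2_der x h1 h0.ne').add
      ((Li2_der (1 - x) (by linarith) hx).comp x (der_sub x))).add
      ((Real.hasDerivAt_log h0.ne').mul (der_log1 x h1))
    refine A.congr_deriv ?_
    rw [sub_sub_cancel]
    field_simp
    ring
  · have e : ∑' n : ℕ, 1 / ((n : ℝ) + 1) ^ 2 = Real.pi ^ 2 / 6 := by
      have := (hasSum_nat_add_iff' 1).2 hasSum_zeta_two
      simpa using this.tsum_eq
    have A := ((aux_lim 2 (by norm_num) Li2 Li2_series).add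
      (lim_left lim_Li2' (by rw [sub_self, Li2_zero]))).add loglog
    rw [e] at A
    simpa using A

lemma landen2 (z : ℝ) (h0 : 0 < z) (h1 : z < 1) :
    Li2 (1 - z) + Li2 (1 - 1 / z) + 1 / 2 * Real.log z ^ 2 = 0 := by
  apply aux_const (fun z => Li2 (1 - z) + Li2 (1 - 1 / z) + 1 / 2 * Real.log z ^ 2) _ _ _ z h0 h1
  · intro x h0 h1
    have hx : 1 - x ≠ 0 := by linarith
    have hx' : x - 1 ≠ 0 := by linarith
    have hi := inv_lt h0 h1
    have A := (((Li2_der (1 - x) (by linarith) hx).comp x (der_sub x)).add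
      ((Li2_der (1 - 1 / x) (by linarith) hi.ne).comp x (der_inv x h0.ne'))).add
      (((Real.hasDerivAt_log h0.ne').pow 2).const_mul (1 / 2))
    refine A.congr_deriv ?_
    rw [sub_sub_cancel, sub_sub_cancel, one_div x, Real.log_inv,
      show 1 - x⁻¹ = -(1 - x) / x by field_simp; ring]
    field_simp
    ring
  · have A := ((lim_left lim_Li2' (by rw [sub_self, Li2_zero])).add
      (lim_left lim_Li2'' (by rw [div_one, sub_self, Li2_zero]))).add
      (((lim_left (Real.continuousAt_log one_ne_zero) Real.log_one).pow 2).const_mul (1 / 2))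
    simpa using A

theorem landen_trilog (z : ℝ) (h0 : 0 < z) (h1 : z < 1) :
    Li3 z + Li3 (1 - z) + Li3 (1 - 1 / z) =
      (∑' n : ℕ, 1 / ((n : ℝ) + 1) ^ 3) + (1 / 6) * Real.log z ^ 3
        + (Real.pi ^ 2 / 6) * Real.log z
        - (1 / 2) * Real.log z ^ 2 * Real.log (1 - z) := by
  have key := aux_const (fun z => Li3 z + Li3 (1 - z) + Li3 (1 - 1 / z)
      - (1 / 6) * Real.log z ^ 3 - (Real.pi ^ 2 / 6) * Real.log z
      + (1 / 2) * (Real.log z * (Real.log z * Real.log (1 - z))))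
      (∑' n : ℕ, 1 / ((n : ℝ) + 1) ^ 3) ?_ ?_ z h0 h1
  · rw [← key]
    ring
  · intro x h0 h1
    have hx : 1 - x ≠ 0 := by linarith
    have hi := inv_lt h0 h1
    have hl := Real.hasDerivAt_log h0.ne'
    have A := ((((((Li3_der x h1 h0.ne').add
      ((Li3_der (1 - x) (by linarith) hx).comp x (der_sub x))).add
      ((Li3_der (1 - 1 / x) (by linarith) hi.ne).comp x (der_inv x h0.ne'))).sub
      ((hl.pow 3).const_mul (1 / 6))).sub
      (hl.const_mul (Real.pi ^ 2 / 6))).add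
      ((hl.mul (hl.mul (der_log1 x h1))).const_mul (1 / 2)))
    refine A.congr_deriv ?_
    rw [Pi.mul_apply]
    have e1 := reflection x h0 h1
    have e2 := landen2 x h0 h1
    have e3 : Li2 (1 - 1 / x) = - Li2 (1 - x) - 1 / 2 * Real.log x ^ 2 := by linarith
    have e4 : Li2 x = Real.pi ^ 2 / 6 - Li2 (1 - x) - Real.log x * Real.log (1 - x) := by linarith
    rw [e3, e4, show 1 - 1 / x = -(1 - x) / x by field_simp; ring]
    field_simp
    ring
  · have hl := lim_left (Real.continuousAt_log one_ne_zero) Real.log_one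
    have A := ((((((aux_lim 3 (by norm_num) Li3 Li3_series).add
      (lim_left lim_Li3' (by rw [sub_self, Li3_zero]))).add
      (lim_left lim_Li3'' (by rw [div_one, sub_self, Li3_zero]))).sub
      ((hl.pow 3).const_mul (1 / 6))).sub
      (hl.const_mul (Real.pi ^ 2 / 6))).add
      ((hl.mul loglog).const_mul (1 / 2)))
    simpa using A
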